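/- For all natural numbers n ≥ 1, k ≥ 1, and s ≥ 2, the equation 3^n + 2 = k^s has no solutions; that is, E_n = 3^n + 2 is never a perfect power with exponent greater than 1. -/

import Mathlib

/-!
Modulo `3` the exponent is odd, so the equation reads `p x² + 2 = k ^ (2 t + 1)` with `x = 3 ^ m`
and `p ∈ {1, 3}`. Thue's pigeonhole argument yields `k = p a² + 2 b²`, and factoring in `ℤ[√(-2p)]`
gives `x √p + √-2 = ± (a √p + b √-2) ^ (2 t + 1)`. Comparing coordinates, `b = ± 1` and `a ∣ 3 ^ m`.

If `3 ∣ a`, the `√-2`-coordinate modulo `9` is `± (-2) ^ t`, which forces `3 ∣ t`; the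
`√p`-coordinate is then `a` times an integer prime to `3`, so `x = ± a` and `k ^ (2 t + 1) = k`,
which is absurd. Otherwise `a = ± 1` and `k = p + 2`, so `k = 5` since `k ≡ 2 (mod 3)`; this last
base is excluded by congruences modulo `25` and `11`.
-/

section Coprimality

lemma isCoprime_of_isCoprime_add_mul {R : Type*} [CommRing R] {x y : R}
    (h : IsCoprime (x + y) (x * y)) : IsCoprime x y := by
  obtain ⟨r, s, hrs⟩ := h
  exact ⟨r + s * y, r, by linear_combination hrs⟩

lemma isUnit_of_dvd_prime_pow {M : Type*} [CommMonoidWithZero M] [IsCancelMulZero M] {p a : M}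
    {n : ℕ} (hp : Prime p) (ha : a ∣ p ^ n) (hpa : ¬p ∣ a) : IsUnit a := by
  obtain ⟨i, -, hi⟩ := (dvd_prime_pow hp n).1 ha
  rcases i.eq_zero_or_pos with rfl | hpos
  · simpa using hi
  · exact absurd ((dvd_pow_self p hpos.ne').trans hi.symm.dvd) hpa

end Coprimality

section QuadraticIntegers

lemma eq_one_or_eq_neg_one_of_norm_eq_one {d : ℤ} (hd : d < -1) {z : ℤ√d} (hz : z.norm = 1) :
    z = 1 ∨ z = -1 := by
  rw [Zsqrtd.norm_def] at hz
  have him : z.im = 0 := by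
    by_contra hne
    nlinarith [sq_pos_of_ne_zero hne, sq_nonneg z.re]
  have hre : z.re ^ 2 = 1 := by rw [him] at hz; linarith
  rcases sq_eq_one_iff.1 hre with h | h
  · exact Or.inl (by ext <;> simp [h, him])
  · exact Or.inr (by ext <;> simp [h, him])

lemma eq_pow_or_eq_neg_pow_of_norm_eq {d : ℤ} (hd : d < -1) {z g : ℤ√d} {t : ℕ}
    (hz : (z ^ t).norm ≠ 0) (hnorm : g.norm = (z ^ t).norm) (hcop : IsCoprime z (star g)) :
    g = z ^ t ∨ g = -z ^ t := by
  have hdvd : z ^ t ∣ g := by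
    refine hcop.pow_left.dvd_of_dvd_mul_right ?_
    rw [← Zsqrtd.norm_eq_mul_conj, hnorm, Zsqrtd.norm_eq_mul_conj]
    exact dvd_mul_right _ _
  obtain ⟨e, rfl⟩ := hdvd
  have he : e.norm = 1 := by
    rw [Zsqrtd.norm_mul] at hnorm
    exact mul_left_cancel₀ hz (hnorm.trans (mul_one _).symm)
  rcases eq_one_or_eq_neg_one_of_norm_eq_one hd he with rfl | rfl
  · exact Or.inl (mul_one _)
  · exact Or.inr (mul_neg_one _)

lemma exists_mk_pow_eq {d : ℤ} (r s : ℤ) (n : ℕ) :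
    ∃ u w : ℤ, (⟨r, s⟩ : ℤ√d) ^ n = ⟨u, s * w⟩ ∧
      u ≡ r ^ n [ZMOD s ^ 2] ∧ w ≡ n * r ^ (n - 1) [ZMOD s] := by
  obtain ⟨k, hk⟩ := Polynomial.powAddExpansion (r : ℤ√d) (Zsqrtd.sqrtd * (s : ℤ√d)) n
  have hsq : (Zsqrtd.sqrtd * (s : ℤ√d)) ^ 2 = ((d * s ^ 2 : ℤ) : ℤ√d) := by
    rw [mul_pow, pow_two Zsqrtd.sqrtd, Zsqrtd.dmuld]
    push_cast
    rfl
  have hlin : (n : ℤ√d) * (r : ℤ√d) ^ (n - 1) * (Zsqrtd.sqrtd * (s : ℤ√d)) =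
      ((n * r ^ (n - 1) * s : ℤ) : ℤ√d) * Zsqrtd.sqrtd := by
    push_cast
    ring
  refine ⟨r ^ n + d * s ^ 2 * k.re, n * r ^ (n - 1) + d * s * k.im, ?_, ?_, ?_⟩
  · rw [Zsqrtd.decompose, hk, hsq, hlin, ← Int.cast_pow, mul_comm k]
    ext
    · simp only [Zsqrtd.re_add, Zsqrtd.re_smul, Zsqrtd.re_intCast, Zsqrtd.re_sqrtd]
      ring
    · simp only [Zsqrtd.im_add, Zsqrtd.im_smul, Zsqrtd.im_intCast, Zsqrtd.im_sqrtd]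
      ring
  · exact Int.modEq_iff_dvd.2 ⟨-(d * k.re), by ring⟩
  · exact Int.modEq_iff_dvd.2 ⟨-(d * k.im), by ring⟩

end QuadraticIntegers

section Surd

/-- The quadratic integer `√p * (x * √p + y * √(-q))`. The factor `√p` brings the binomial surd,
whose norm is the binary form `p * x ^ 2 + q * y ^ 2`, into `ℤ[√(-p * q)]`. -/
def surd (p q x y : ℤ) : ℤ√(-(p * q)) := ⟨p * x, y⟩

/-- The square of the binomial surd `x * √p + y * √(-q)`, which, unlike the surd itself, always
lies in `ℤ[√(-p * q)]`. -/
def surdSq (p q x y : ℤ) : ℤ√(-(p * q)) := ⟨p * x ^ 2 - q * y ^ 2, 2 * x * y⟩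

variable {p q x y a b : ℤ}

lemma surd_sq (p q x y : ℤ) : surd p q x y ^ 2 = (p : ℤ√(-(p * q))) * surdSq p q x y := by
  rw [pow_two, Zsqrtd.ext_iff, Zsqrtd.re_smul, Zsqrtd.im_smul, Zsqrtd.re_mul, Zsqrtd.im_mul]
  simp only [surd, surdSq]
  constructor <;> ring

lemma norm_surd (p q x y : ℤ) : (surd p q x y).norm = p * (p * x ^ 2 + q * y ^ 2) := by
  simp only [Zsqrtd.norm_def, surd]
  ring

lemma norm_surdSq (p q x y : ℤ) : (surdSq p q x y).norm = (p * x ^ 2 + q * y ^ 2) ^ 2 := by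
  simp only [Zsqrtd.norm_def, surdSq]
  ring

lemma surdSq_add_star (p q x y : ℤ) :
    surdSq p q x y + star (surdSq p q x y) =
      ((2 * (p * x ^ 2 - q * y ^ 2) : ℤ) : ℤ√(-(p * q))) := by
  ext
  · simp only [Zsqrtd.re_add, Zsqrtd.re_star, Zsqrtd.re_intCast, surdSq]
    ring
  · simp only [Zsqrtd.im_add, Zsqrtd.im_star, Zsqrtd.im_intCast, add_neg_cancel]

lemma isCoprime_surdSq_star (h : IsCoprime (p * x ^ 2 + q * y ^ 2) (2 * q * y)) :
    IsCoprime (surdSq p q x y) (star (surdSq p q x y)) := by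
  apply isCoprime_of_isCoprime_add_mul
  rw [surdSq_add_star, ← Zsqrtd.norm_eq_mul_conj, norm_surdSq]
  refine (IsCoprime.pow_right ?_).intCast
  have h2y : IsCoprime (p * x ^ 2 + q * y ^ 2) (2 * y) :=
    h.of_isCoprime_of_dvd_right ⟨q, by ring⟩
  have htrace : 2 * (p * x ^ 2 - q * y ^ 2) =
      -(2 * q * y * (2 * y)) + (p * x ^ 2 + q * y ^ 2) * 2 := by ring
  rw [htrace]
  exact ((h.mul_right h2y).neg_right.add_mul_left_right 2).symm

lemma exists_surd_eq_surd_mul (hk : p * a ^ 2 + q * b ^ 2 ≠ 0)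
    (hy : IsCoprime (p * a ^ 2 + q * b ^ 2) y)
    (hdvd : p * a ^ 2 + q * b ^ 2 ∣ p * x ^ 2 + q * y ^ 2)
    (hprop : p * a ^ 2 + q * b ^ 2 ∣ a * y - b * x) :
    ∃ g, surd p q x y = surd p q a b * g := by
  obtain ⟨v, hv⟩ := hprop
  have hdvd_conj : p * a ^ 2 + q * b ^ 2 ∣ p * a * x + q * b * y := by
    refine hy.dvd_of_dvd_mul_left ?_
    obtain ⟨w, hw⟩ := hdvd
    exact ⟨p * x * v + b * w, by linear_combination p * x * hv + b * hw⟩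
  obtain ⟨u, hu⟩ := hdvd_conj
  have hx : x = a * u - q * b * v :=
    mul_left_cancel₀ hk (by linear_combination a * hu - q * b * hv)
  have hy : y = b * u + p * a * v :=
    mul_left_cancel₀ hk (by linear_combination b * hu + p * a * hv)
  refine ⟨⟨u, v⟩, Zsqrtd.ext_iff.2 ⟨?_, ?_⟩⟩
  · simp only [Zsqrtd.re_mul, surd]
    linear_combination p * hx
  · simp only [Zsqrtd.im_mul, surd]
    linear_combination hy

lemma surdSq_eq_of_surd_eq_mul (hp : p ≠ 0) {g : ℤ√(-(p * q))}
    (h : surd p q x y = surd p q a b * g) : surdSq p q x y = surdSq p q a b * g ^ 2 :=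
  Zsqrtd.eq_of_smul_eq_smul_left hp <| by rw [← surd_sq, h, mul_pow, surd_sq, mul_assoc]

lemma surd_eq_or_eq_neg_of_form_eq_pow {t : ℕ} (hpq : 1 < p * q)
    (hcop : IsCoprime (p * a ^ 2 + q * b ^ 2) (2 * q * y))
    (hpow : p * x ^ 2 + q * y ^ 2 = (p * a ^ 2 + q * b ^ 2) ^ (2 * t + 1))
    (hprop : p * a ^ 2 + q * b ^ 2 ∣ a * y - b * x) :
    surd p q x y = surd p q a b * surdSq p q a b ^ t ∨
      surd p q x y = -(surd p q a b * surdSq p q a b ^ t) := by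
  have hp : p ≠ 0 := by rintro rfl; simp at hpq
  have hk : p * a ^ 2 + q * b ^ 2 ≠ 0 := fun h ↦ by
    rw [h, isCoprime_zero_left] at hcop
    exact Int.prime_two.not_isUnit (isUnit_of_dvd_unit ⟨q * y, by ring⟩ hcop)
  obtain ⟨g, hg⟩ := exists_surd_eq_surd_mul hk hcop.of_mul_right_right
    (hpow ▸ dvd_pow_self _ (Nat.succ_ne_zero _)) hprop
  have hsq := surdSq_eq_of_surd_eq_mul hp hg
  have hnorm_pow : (surdSq p q a b ^ t).norm = ((p * a ^ 2 + q * b ^ 2) ^ 2) ^ t := by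
    rw [← norm_surdSq]
    exact map_pow Zsqrtd.normMonoidHom _ t
  have hnorm : g.norm = (surdSq p q a b ^ t).norm := by
    have h : p * (p * a ^ 2 + q * b ^ 2) ^ (2 * t + 1) = p * (p * a ^ 2 + q * b ^ 2) * g.norm := by
      rw [← hpow, ← norm_surd, ← norm_surd, hg, Zsqrtd.norm_mul]
    rw [hnorm_pow, ← pow_mul]
    exact mul_left_cancel₀ (mul_ne_zero hp hk) (by rw [← h]; ring)
  have hcop_star : IsCoprime (surdSq p q a b) (star g) := by
    have hxy : IsCoprime (surdSq p q x y) (star (surdSq p q x y)) :=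
      isCoprime_surdSq_star (hpow ▸ hcop.pow_left)
    refine (hxy.of_isCoprime_of_dvd_left ⟨_, hsq⟩).of_isCoprime_of_dvd_right ?_
    exact ⟨star (surdSq p q a b * g), by rw [hsq, ← star_mul']; congr 1; ring⟩
  have hz : (surdSq p q a b ^ t).norm ≠ 0 :=
    hnorm_pow ▸ pow_ne_zero t (pow_ne_zero 2 hk)
  rcases eq_pow_or_eq_neg_pow_of_norm_eq (by linarith) hz hnorm hcop_star with rfl | rfl
  · exact Or.inl hg
  · exact Or.inr (hg.trans (mul_neg _ _))

lemma exists_coords_of_surd_eq_or_eq_neg {t : ℕ} (hp : p ≠ 0)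
    (h : surd p q x y = surd p q a b * surdSq p q a b ^ t ∨
      surd p q x y = -(surd p q a b * surdSq p q a b ^ t)) :
    ∃ u w : ℤ, x ^ 2 = a ^ 2 * (u - 2 * q * b ^ 2 * w) ^ 2 ∧
      y ^ 2 = b ^ 2 * (u + 2 * p * a ^ 2 * w) ^ 2 ∧
      u ≡ (p * a ^ 2 - q * b ^ 2) ^ t [ZMOD (2 * a * b) ^ 2] ∧
      w ≡ t * (p * a ^ 2 - q * b ^ 2) ^ (t - 1) [ZMOD 2 * a * b] := by
  obtain ⟨u, w, hpow, hu, hw⟩ :=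
    exists_mk_pow_eq (d := -(p * q)) (p * a ^ 2 - q * b ^ 2) (2 * a * b) t
  have hprod : surd p q a b * surdSq p q a b ^ t =
      surd p q (a * (u - 2 * q * b ^ 2 * w)) (b * (u + 2 * p * a ^ 2 * w)) := by
    rw [surdSq, hpow]
    ext
    · simp only [Zsqrtd.re_mul, surd]
      ring
    · simp only [Zsqrtd.im_mul, surd]
      ring
  have hcoords : (x = a * (u - 2 * q * b ^ 2 * w) ∧ y = b * (u + 2 * p * a ^ 2 * w)) ∨
      (x = -(a * (u - 2 * q * b ^ 2 * w)) ∧ y = -(b * (u + 2 * p * a ^ 2 * w))) := by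
    rw [hprod] at h
    simpa only [surd, Zsqrtd.ext_iff, Zsqrtd.re_neg, Zsqrtd.im_neg, ← mul_neg p,
      mul_right_inj' hp] using h
  refine ⟨u, w, ?_, ?_, hu, hw⟩
  · rw [← mul_pow]
    exact sq_eq_sq_iff_eq_or_eq_neg.2 (hcoords.imp And.left And.left)
  · rw [← mul_pow]
    exact sq_eq_sq_iff_eq_or_eq_neg.2 (hcoords.imp And.right And.right)

end Surd

section Thue

lemma exists_small_dvd_sub_mul {k : ℕ} (hk : k ≠ 0) (x : ℤ) :
    ∃ a b : ℤ, (a ≠ 0 ∨ b ≠ 0) ∧ a ^ 2 ≤ k ∧ b ^ 2 ≤ k ∧ (k : ℤ) ∣ a - b * x := by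
  have : NeZero k := ⟨hk⟩
  let f : Fin (k.sqrt + 1) × Fin (k.sqrt + 1) → ZMod k :=
    fun i ↦ (i.1 : ℕ) - (i.2 : ℕ) * (x : ZMod k)
  obtain ⟨i, j, hij, hf⟩ :=
    Fintype.exists_ne_map_eq_of_card_lt f (by simpa [ZMod.card] using Nat.lt_succ_sqrt k)
  have sq_sub_le (i j : Fin (k.sqrt + 1)) : ((i : ℤ) - j) ^ 2 ≤ k := by
    have habs : |(i : ℤ) - j| ≤ k.sqrt := by rw [abs_le]; omega
    have hsqrt : (k.sqrt : ℤ) ^ 2 ≤ k := by exact_mod_cast Nat.sqrt_le' k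
    exact (sq_le_sq' (abs_le.1 habs).1 (abs_le.1 habs).2).trans hsqrt
  refine ⟨i.1 - j.1, i.2 - j.2, ?_, sq_sub_le _ _, sq_sub_le _ _, ?_⟩
  · by_contra! h
    apply hij
    ext <;> omega
  · rw [← ZMod.intCast_zmod_eq_zero_iff_dvd]
    push_cast
    linear_combination (hf : ((i.1 : ℕ) - (i.2 : ℕ) * (x : ZMod k) : ZMod k) = _)

lemma exists_form_eq_mul {k : ℕ} (hk : ¬IsSquare k) {p q x : ℤ} (hp : 0 < p) (hq : 0 < q)
    (hdvd : (k : ℤ) ∣ p * x ^ 2 + q) :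
    ∃ a b m : ℤ, p * a ^ 2 + q * b ^ 2 = m * k ∧ 0 < m ∧ m < p + q ∧ (k : ℤ) ∣ a - b * x := by
  have hk0 : k ≠ 0 := fun h ↦ hk (h ▸ IsSquare.zero)
  have ne_sq (z : ℤ) : z ^ 2 ≠ k := fun h ↦
    hk ⟨z.natAbs, by zify; rw [← h, ← sq, sq_abs]⟩
  obtain ⟨a, b, hab, ha, hb, v, hv⟩ := exists_small_dvd_sub_mul hk0 x
  have ha' : a ^ 2 < k := ha.lt_of_ne (ne_sq a)
  have hb' : b ^ 2 < k := hb.lt_of_ne (ne_sq b)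
  obtain ⟨w, hw⟩ := hdvd
  have hm : p * a ^ 2 + q * b ^ 2 = (w * b ^ 2 + p * v * (a + b * x)) * k := by
    linear_combination b ^ 2 * hw + p * (a + b * x) * hv
  have hpos : 0 < p * a ^ 2 + q * b ^ 2 := by
    rcases hab with h | h <;> positivity
  have hlt : p * a ^ 2 + q * b ^ 2 < (p + q) * k := by nlinarith
  refine ⟨a, b, _, hm, ?_, ?_, v, hv⟩
  · exact pos_of_mul_pos_left (hm ▸ hpos) (Int.natCast_nonneg k)
  · exact lt_of_mul_lt_mul_right (hm ▸ hlt) (Int.natCast_nonneg k)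

lemma exists_sq_add_two_mul_sq_eq {k : ℕ} (hodd : Odd k) (hk : ¬IsSquare k) {x : ℤ}
    (hdvd : (k : ℤ) ∣ x ^ 2 + 2) :
    ∃ a b : ℤ, a ^ 2 + 2 * b ^ 2 = k ∧ (k : ℤ) ∣ a - b * x := by
  obtain ⟨a, b, m, hm, hm0, hm3, hab⟩ := exists_form_eq_mul hk one_pos two_pos (by rwa [one_mul])
  rw [one_mul] at hm
  obtain rfl | rfl : m = 1 ∨ m = 2 := by omega
  · exact ⟨a, b, by linarith, hab⟩
  · obtain ⟨c, rfl⟩ : 2 ∣ a := Int.prime_two.dvd_of_dvd_pow (n := 2) (by omega)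
    refine ⟨b, -c, by linarith, ?_⟩
    have hcop : IsCoprime (k : ℤ) 2 := Int.isCoprime_two_right.2 (mod_cast hodd)
    refine hcop.dvd_of_dvd_mul_left ?_
    obtain ⟨v, hv⟩ := hab
    obtain ⟨w, hw⟩ := hdvd
    exact ⟨b * w + x * v, by linear_combination b * hw + x * hv⟩

lemma not_isSquare_of_mod_three_eq_two {k : ℕ} (hk : k % 3 = 2) : ¬IsSquare k := by
  rintro ⟨r, rfl⟩
  have hr : r % 3 < 3 := Nat.mod_lt _ (by norm_num)
  rw [Nat.mul_mod] at hk
  interval_cases r % 3 <;> omega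

lemma exists_three_mul_sq_add_two_mul_sq_eq {k : ℕ} (hodd : Odd k) (hk : k % 3 = 2) {x : ℤ}
    (hdvd : (k : ℤ) ∣ 3 * x ^ 2 + 2) :
    ∃ a b : ℤ, 3 * a ^ 2 + 2 * b ^ 2 = k ∧ (k : ℤ) ∣ a - b * x := by
  obtain ⟨a, b, m, hm, hm0, hm5, hab⟩ :=
    exists_form_eq_mul (not_isSquare_of_mod_three_eq_two hk) three_pos two_pos hdvd
  have sq_mod_three (z : ℤ) : z ^ 2 % 3 = 0 ∨ z ^ 2 % 3 = 1 := by
    rcases (by omega : z % 3 = 0 ∨ z % 3 = 1 ∨ z % 3 = 2) with h | h | h <;>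
      simp [pow_two, Int.mul_emod, h]
  obtain rfl | rfl | rfl | rfl : m = 1 ∨ m = 2 ∨ m = 3 ∨ m = 4 := by omega
  · exact ⟨a, b, by linarith, hab⟩
  · have := sq_mod_three b
    omega
  · obtain ⟨c, rfl⟩ : 3 ∣ b := Int.prime_three.dvd_of_dvd_pow (n := 2) (by omega)
    have := sq_mod_three a
    rw [mul_pow] at hm
    omega
  · obtain ⟨c, rfl⟩ : 2 ∣ a := Int.prime_two.dvd_of_dvd_pow (n := 2) (by omega)
    obtain ⟨d, rfl⟩ : 2 ∣ b := Int.prime_two.dvd_of_dvd_pow (n := 2) (by rw [mul_pow] at hm; omega)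
    refine ⟨c, d, by linarith, ?_⟩
    have hcop : IsCoprime (k : ℤ) 2 := Int.isCoprime_two_right.2 (mod_cast hodd)
    exact hcop.dvd_of_dvd_mul_left (by rwa [mul_sub, ← mul_assoc])

end Thue

section PowersOfThree

lemma three_dvd_of_sq_neg_two_pow_modEq_one {t : ℕ} (h : ((-2) ^ t) ^ 2 ≡ 1 [ZMOD 9]) : 3 ∣ t := by
  have horder : orderOf (4 : ZMod 9) = 3 := orderOf_eq_prime (by decide) (by decide)
  rw [← horder]
  apply orderOf_dvd_of_pow_eq_one
  rw [← pow_mul, mul_comm t, pow_mul] at h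
  simpa using (ZMod.intCast_eq_intCast_iff _ _ 9).2 h

lemma not_three_dvd_sub_four_mul {p a u w : ℤ} {t : ℕ} (ha : 3 ∣ a)
    (hone : (u + 2 * p * a ^ 2 * w) ^ 2 = 1) (hu : u ≡ (p * a ^ 2 - 2) ^ t [ZMOD 9])
    (hw : w ≡ t * (p * a ^ 2 - 2) ^ (t - 1) [ZMOD 3]) : ¬3 ∣ u - 4 * w := by
  have ha9 : a ^ 2 ≡ 0 [ZMOD 9] := Int.modEq_zero_iff_dvd.2 (pow_dvd_pow_of_dvd ha 2)
  have hbase : p * a ^ 2 - 2 ≡ -2 [ZMOD 9] := by simpa using (ha9.mul_left p).sub_right 2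
  have husq : u ^ 2 ≡ 1 [ZMOD 9] := by
    have h := (((ha9.mul_left (2 * p)).mul_right w).add_left u).pow 2
    rw [hone, mul_zero, zero_mul, add_zero] at h
    exact h.symm
  have ht : 3 ∣ t :=
    three_dvd_of_sq_neg_two_pow_modEq_one (((hu.trans (hbase.pow t)).pow 2).symm.trans husq)
  have hw3 : 3 ∣ w := by
    rw [hw.dvd_iff]
    exact (Int.natCast_dvd_natCast.2 ht).mul_right _
  intro hdvd
  have hu3 : 3 ∣ u := (dvd_sub_left (hw3.mul_left 4)).1 hdvd
  have hu9 : u ^ 2 ≡ 0 [ZMOD 9] := Int.modEq_zero_iff_dvd.2 (pow_dvd_pow_of_dvd hu3 2)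
  exact absurd (hu9.symm.trans husq) (by decide)

lemma form_eq_add_two {p a b : ℤ} {m t : ℕ} (hp : 0 < p) (ht : t ≠ 0)
    (hodd : Odd (p * a ^ 2 + 2 * b ^ 2))
    (hpow : p * (3 ^ m) ^ 2 + 2 = (p * a ^ 2 + 2 * b ^ 2) ^ (2 * t + 1))
    (hprop : p * a ^ 2 + 2 * b ^ 2 ∣ a - b * 3 ^ m) : p * a ^ 2 + 2 * b ^ 2 = p + 2 := by
  have hcop : IsCoprime (p * a ^ 2 + 2 * b ^ 2) (2 * 2 * 1) := by
    have h2 := Int.isCoprime_two_right.2 hodd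
    simpa only [mul_one] using h2.mul_right h2
  obtain ⟨u, w, hx, hy, hu, hw⟩ := exists_coords_of_surd_eq_or_eq_neg hp.ne' <|
    surd_eq_or_eq_neg_of_form_eq_pow (x := 3 ^ m) (by linarith) hcop
      (by rw [← hpow]; ring) (by rwa [mul_one])
  have hb : b ^ 2 = 1 := Int.isUnit_sq <| isUnit_of_dvd_one <|
    (dvd_pow_self b two_ne_zero).trans ⟨_, by rw [← hy, one_pow]⟩
  have hone : (u + 2 * p * a ^ 2 * w) ^ 2 = 1 := by
    rw [hb] at hy
    linarith
  rw [hb, mul_one] at hx hu hw hpow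
  rw [hb]
  by_cases h3 : 3 ∣ a
  · have h3ab : 3 ∣ 2 * a * b := (h3.mul_left 2).mul_right b
    have hndvd : ¬3 ∣ u - 2 * 2 * w :=
      not_three_dvd_sub_four_mul h3 hone (hu.of_dvd (pow_dvd_pow_of_dvd h3ab 2)) (hw.of_dvd h3ab)
    have hdvd : u - 2 * 2 * w ∣ 3 ^ (m * 2) :=
      (dvd_pow_self _ two_ne_zero).trans ⟨a ^ 2, by rw [pow_mul, hx, mul_comm]⟩
    rw [hx, Int.isUnit_sq (isUnit_of_dvd_prime_pow Int.prime_three hdvd hndvd), mul_one] at hpow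
    have hlt : 1 < p * a ^ 2 + 2 := by linarith [mul_nonneg hp.le (sq_nonneg a)]
    have := (pow_right_inj₀ (by linarith) hlt.ne').1 (hpow.symm.trans (pow_one _).symm)
    omega
  · have hdvd : a ∣ 3 ^ (m * 2) :=
      (dvd_pow_self a two_ne_zero).trans ⟨(u - 2 * 2 * w) ^ 2, by rw [pow_mul, hx]⟩
    rw [Int.isUnit_sq (isUnit_of_dvd_prime_pow Int.prime_three hdvd h3)]
    ring

lemma eq_five_of_three_pow_add_two_eq_pow {n k t : ℕ} (ht : t ≠ 0) (hodd : Odd k)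
    (hk : k % 3 = 2) (h : 3 ^ n + 2 = k ^ (2 * t + 1)) : k = 5 := by
  have hoddz : Odd (k : ℤ) := mod_cast hodd
  have hpow : (3 : ℤ) ^ n + 2 = (k : ℤ) ^ (2 * t + 1) := mod_cast h
  have hdvd : (k : ℤ) ∣ 3 ^ n + 2 := hpow ▸ dvd_pow_self _ (Nat.succ_ne_zero _)
  obtain ⟨m, rfl | rfl⟩ := n.even_or_odd'
  · have hsq : (3 : ℤ) ^ (2 * m) = (3 ^ m) ^ 2 := by ring
    rw [hsq] at hpow hdvd
    obtain ⟨a, b, hab, hprop⟩ :=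
      exists_sq_add_two_mul_sq_eq hodd (not_isSquare_of_mod_three_eq_two hk) hdvd
    rw [← one_mul (a ^ 2)] at hab
    rw [← one_mul ((3 ^ m) ^ 2)] at hpow
    rw [← hab] at hoddz hpow hprop
    have := form_eq_add_two one_pos ht hoddz hpow hprop
    omega
  · have hsq : (3 : ℤ) ^ (2 * m + 1) = 3 * (3 ^ m) ^ 2 := by ring
    rw [hsq] at hpow hdvd
    obtain ⟨a, b, hab, hprop⟩ := exists_three_mul_sq_add_two_mul_sq_eq hodd hk hdvd
    rw [← hab] at hoddz hpow hprop
    have := form_eq_add_two three_pos ht hoddz hpow hprop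
    omega

lemma mod_five_eq_three_of_three_pow_eq_neg_two {n : ℕ} (h : (3 : ZMod 25) ^ n = -2) :
    n % 5 = 3 := by
  have h6 : (6 : ZMod 25) ^ n = 6 ^ 3 := calc
    (6 : ZMod 25) ^ n = (3 ^ 4) ^ n := by congr 1
    _ = (-2) ^ 4 := by rw [← pow_mul, mul_comm, pow_mul, h]
    _ = 6 ^ 3 := by decide
  rw [pow_eq_pow_mod n (by decide : (6 : ZMod 25) ^ 5 = 1)] at h6
  have hlt : n % 5 < 5 := Nat.mod_lt _ (by norm_num)
  interval_cases n % 5 <;> first | rfl | exact absurd h6 (by decide)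

lemma three_pow_add_two_ne_five_pow (n : ℕ) {s : ℕ} (hs : 2 ≤ s) : 3 ^ n + 2 ≠ 5 ^ s := by
  intro h
  have hn : n % 5 = 3 := by
    apply mod_five_eq_three_of_three_pow_eq_neg_two
    have h25 := congrArg (Nat.cast : ℕ → ZMod 25) h
    push_cast at h25
    rw [eq_neg_iff_add_eq_zero, h25]
    exact pow_eq_zero_of_le hs (by decide)
  have h11 : (5 : ZMod 11) ^ s = 7 := by
    have h' := congrArg (Nat.cast : ℕ → ZMod 11) h
    push_cast at h'
    rw [← h', pow_eq_pow_mod n (by decide : (3 : ZMod 11) ^ 5 = 1), hn]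
    decide
  have hfifth : (7 : ZMod 11) ^ 5 = 1 := by
    rw [← h11, ← pow_mul, mul_comm, pow_mul, (by decide : (5 : ZMod 11) ^ 5 = 1), one_pow]
  exact absurd hfifth (by decide)

end PowersOfThree

lemma mod_three_eq_two_of_pow_mod_three_eq_two {k s : ℕ} (h : k ^ s % 3 = 2) : k % 3 = 2 := by
  rw [Nat.pow_mod] at h
  have hlt : k % 3 < 3 := Nat.mod_lt _ (by norm_num)
  interval_cases k % 3
  · rcases s.eq_zero_or_pos with rfl | hs
    · simp at h
    · simp [hs.ne'] at h
  · simp at h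
  · rfl

theorem E_not_perfect_power (n k s : ℕ) (hn : 1 ≤ n) (hk : 1 ≤ k) (hs : 2 ≤ s) :
    3 ^ n + 2 ≠ k ^ s := by
  intro h
  have hmod : k ^ s % 3 = 2 := by
    have : 3 ∣ 3 ^ n := dvd_pow_self 3 (by omega)
    omega
  have hodd : Odd k := by
    rw [← Nat.odd_pow_iff (by omega : s ≠ 0), ← h]
    exact (Odd.pow (by decide)).add_even even_two
  obtain ⟨t, rfl | rfl⟩ := s.even_or_odd'
  · exact not_isSquare_of_mod_three_eq_two hmod ((even_two_mul t).isSquare_pow k)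
  · obtain rfl : k = 5 := eq_five_of_three_pow_add_two_eq_pow (by omega) hodd
      (mod_three_eq_two_of_pow_mod_three_eq_two hmod) h
    exact three_pow_add_two_ne_five_pow n hs h
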